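/- Let (E,F,H) be a representation of sl(2,ℂ) on a complex vector space V with not all of E, F, H equal to zero. Let (ρ^>_i)_{i≥−1} be a Witt_>-module structure on V compatible with (E,F,H) and let (ρ^<_i)_{i≤1} be a Witt_<-module structure on V compatible with (E,F,H); set T = ρ^>₂, S = ρ^<₋₂ and K = 4H − 2[S,T] ∈ End(V). Then there exists a Virasoro-module structure ((ρ_i)_{i∈ℤ}, K') on V compatible with (E,F,H) with ρ_i = ρ^>_i for all i ≥ −1 and ρ_i = ρ^<_i for all i ≤ 1 if and only if K commutes with both S and T. Moreover, in that case every such Virasoro-module structure has K' = K. -/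

import Mathlib

/-- Witt_>-module structure compatible with `(E,F,H)`. -/
def IsWittGtModule {V : Type*} [AddCommGroup V] [Module ℂ V]
    (E F H : Module.End ℂ V) (ρ : ℤ → Module.End ℂ V) : Prop :=
  ρ (-1) = F ∧ ρ 0 = (-(1/2) : ℂ) • H ∧ ρ 1 = -E ∧
    ∀ i j : ℤ, -1 ≤ i → -1 ≤ j → ⁅ρ i, ρ j⁆ = ((i - j : ℤ) : ℂ) • ρ (i + j)

/-- Witt_<-module structure compatible with `(E,F,H)`. -/
def IsWittLtModule {V : Type*} [AddCommGroup V] [Module ℂ V]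
    (E F H : Module.End ℂ V) (ρ : ℤ → Module.End ℂ V) : Prop :=
  ρ (-1) = F ∧ ρ 0 = (-(1/2) : ℂ) • H ∧ ρ 1 = -E ∧
    ∀ i j : ℤ, i ≤ 1 → j ≤ 1 → ⁅ρ i, ρ j⁆ = ((i - j : ℤ) : ℂ) • ρ (i + j)

/-- Virasoro-module structure compatible with `(E,F,H)`; `K'` represents the
central element `C`. -/
def IsVirasoroModule {V : Type*} [AddCommGroup V] [Module ℂ V]
    (E F H : Module.End ℂ V) (ρ : ℤ → Module.End ℂ V) (K' : Module.End ℂ V) : Prop :=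
  ρ (-1) = F ∧ ρ 0 = (-(1/2) : ℂ) • H ∧ ρ 1 = -E ∧
    (∀ i : ℤ, ⁅K', ρ i⁆ = 0) ∧
    ∀ i j : ℤ, ⁅ρ i, ρ j⁆ = ((i - j : ℤ) : ℂ) • ρ (i + j) +
      (if i + j = 0 then (((i ^ 3 - i : ℤ) : ℂ) / 12) • K' else 0)

/-!
Write `Lᵢ` for the glued family and normalise `K` by `[L₂, L₋₂] = 4L₀ + K/2`. Everything comes down
to `[L₁, K] = 0`: then `[L₋₁, K] = 0` by symmetry, `K` is central because `L₋₁, …, L₂` and `L₋₂`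
generate all the `Lᵢ`, and the Virasoro relations follow by induction from Jacobi identities with
`L₋₁`.

The element `K` has weight `0`, so it generates a module over the adjoint `sl₂ = ⟨L₋₁, L₀, L₁⟩` on
whose vectors `Xₖ = ad(L₁)ᵏ K` everything is expressed by the Casimir operator `Ω`. By induction
`[Lₙ₊₂, L₋₂] = (n + 4) Lₙ + (-1)ⁿ / (2 n!) Xₙ`, and the Jacobi identities for `(L₂, L₃, L₋₂)` and
`(L₂, L₅, L₋₂)` determine `[L₂, X₁]` and `[L₂, X₃]`. From these one gets `[Xₖ, K]` for `k ≤ 3`,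
`[X₁, X₂]`, `[X₁, ΩK]` and `Ω²X₁` as combinations of the `Xⱼ` and `ΩXⱼ`. Finally `[X₁, ΩX₁]` can be
evaluated in two ways, from `[ΩK, K] = 0` and from `[X₁, X₂] = -12 X₃`; the results differ by
`63 X₂ + 23/2 ΩX₂`, so this vanishes, and applying `ad(L₋₂)` gives `ΩK = 0`. Hence `ΩX₁ = 0`, and
`Ω²X₁ = 588 X₁ + 100 ΩX₁` forces `X₁ = [L₁, K] = 0`.
-/

namespace VirasoroGluing

variable (𝕜 : Type*) {g : Type*} [Field 𝕜] [LieRing g] [LieAlgebra 𝕜 g]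

/-- The Witt relations `[Lᵢ, Lⱼ] = (i - j) Lᵢ₊ⱼ` for indices in `s`. The sum `i + j` may leave `s`,
but for `s = Set.Ici (-1)` and `s = Set.Iic 1` this only happens with coefficient `0`. -/
def IsWittOn (s : Set ℤ) (L : ℤ → g) : Prop :=
  ∀ i j : ℤ, i ∈ s → j ∈ s → ⁅L i, L j⁆ = ((i - j : ℤ) : 𝕜) • L (i + j)

/-- The value which the Virasoro relations prescribe for `[Lᵢ, Lⱼ]`, with central element `K`. -/
def virasoroBracket (L : ℤ → g) (K : g) (i j : ℤ) : g :=
  ((i - j : ℤ) : 𝕜) • L (i + j) + (if i + j = 0 then (((i ^ 3 - i : ℤ) : 𝕜) / 12) • K else 0)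

/-- The Virasoro relations for a family `L` with central element `K`. -/
def IsVirasoro (L : ℤ → g) (K : g) : Prop :=
  (∀ i : ℤ, ⁅K, L i⁆ = 0) ∧ ∀ i j : ℤ, ⁅L i, L j⁆ = virasoroBracket 𝕜 L K i j

theorem virasoroBracket_of_add_ne_zero (L : ℤ → g) (K : g) {i j : ℤ} (hij : i + j ≠ 0) :
    virasoroBracket 𝕜 L K i j = ((i - j : ℤ) : 𝕜) • L (i + j) := by
  simp [virasoroBracket, hij]

theorem virasoroBracket_of_neg_one_le (L : ℤ → g) (K : g) {i j : ℤ} (hi : -1 ≤ i) (hj : -1 ≤ j) :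
    virasoroBracket 𝕜 L K i j = ((i - j : ℤ) : 𝕜) • L (i + j) := by
  by_cases hij : i + j = 0
  · obtain rfl | rfl | rfl : i = -1 ∨ i = 0 ∨ i = 1 := by lia
    all_goals simp [virasoroBracket]
  · exact virasoroBracket_of_add_ne_zero 𝕜 L K hij

theorem virasoroBracket_swap (L : ℤ → g) (K : g) (i j : ℤ) :
    virasoroBracket 𝕜 L K j i = -virasoroBracket 𝕜 L K i j := by
  unfold virasoroBracket
  by_cases hij : i + j = 0
  · obtain rfl : j = -i := by lia
    simp only [neg_add_cancel, add_neg_cancel, if_true]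
    push_cast
    module
  · rw [if_neg hij, if_neg (by lia), add_comm j i]
    push_cast
    module

/-- The Chevalley involution `Lₙ ↦ -L₋ₙ`, which exchanges the two halves of the Witt algebra. -/
def reflected (L : ℤ → g) (n : ℤ) : g := -L (-n)

/-- The vectors `ad(L₁)ᵏ K`. -/
def ladder (L : ℤ → g) (K : g) : ℕ → g
  | 0 => K
  | k + 1 => ⁅L 1, ladder L K k⁆

theorem lie_one_ladder (L : ℤ → g) (K : g) (k : ℕ) : ⁅L 1, ladder L K k⁆ = ladder L K (k + 1) := rfl

/-- The Casimir operator of the copy of `sl₂` spanned by `L₋₁, L₀, L₁`, acting by the adjoint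
action and normalised so that it is `ad(L₁) ad(L₋₁)` on vectors of weight `0`. -/
def casimir (L : ℤ → g) : Module.End 𝕜 g :=
  LieAlgebra.ad 𝕜 g (L 1) * LieAlgebra.ad 𝕜 g (L (-1)) - LieAlgebra.ad 𝕜 g (L 0) ^ 2
    - LieAlgebra.ad 𝕜 g (L 0)

theorem casimir_apply (L : ℤ → g) (x : g) :
    casimir 𝕜 L x = ⁅L 1, ⁅L (-1), x⁆⁆ - ⁅L 0, ⁅L 0, x⁆⁆ - ⁅L 0, x⁆ := by
  simp [casimir, pow_two]

variable {𝕜} {s t : Set ℤ} {L : ℤ → g}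

namespace IsWittOn

theorem mono (h : IsWittOn 𝕜 t L) (hst : s ⊆ t) : IsWittOn 𝕜 s L :=
  fun i j hi hj ↦ h i j (hst hi) (hst hj)

theorem congr (h : IsWittOn 𝕜 s L) {L' : ℤ → g} (hL : Set.EqOn L L' s)
    (hs : ∀ i ∈ s, ∀ j ∈ s, i ≠ j → i + j ∈ s) : IsWittOn 𝕜 s L' := by
  intro i j hi hj
  obtain rfl | hij := eq_or_ne i j
  · simp
  · rw [← hL hi, ← hL hj, ← hL (hs i hi j hj hij), h i j hi hj]

theorem lie_eq (h : IsWittOn 𝕜 s L) {i j k : ℤ} {c : 𝕜} (hi : i ∈ s := by simp)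
    (hj : j ∈ s := by simp) (hk : i + j = k := by norm_num)
    (hc : ((i - j : ℤ) : 𝕜) = c := by norm_num) : ⁅L i, L j⁆ = c • L k := by
  rw [h i j hi hj, hk, hc]

theorem lie_lie (h : IsWittOn 𝕜 s L) {i j k : ℤ} {c : 𝕜} (x : g) (hi : i ∈ s := by simp)
    (hj : j ∈ s := by simp) (hk : i + j = k := by norm_num)
    (hc : ((i - j : ℤ) : 𝕜) = c := by norm_num) :
    ⁅L i, ⁅L j, x⁆⁆ = c • ⁅L k, x⁆ + ⁅L j, ⁅L i, x⁆⁆ := by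
  rw [leibniz_lie, h.lie_eq hi hj hk hc, smul_lie]

theorem reflect (h : IsWittOn 𝕜 s L) : IsWittOn 𝕜 (-s) (reflected L) := by
  intro i j hi hj
  have hij := h (-i) (-j) hi hj
  simp only [reflected, neg_lie, lie_neg, neg_neg, hij, neg_add]
  push_cast
  module

section Sl2

variable (h : IsWittOn 𝕜 (Set.Icc (-1) 1) L)
include h

theorem lie_zero_lie_one (x : g) : ⁅L 0, ⁅L 1, x⁆⁆ = ⁅L 1, ⁅L 0, x⁆⁆ - ⁅L 1, x⁆ := by
  have : ⁅L 0, ⁅L 1, x⁆⁆ = (-1 : 𝕜) • ⁅L 1, x⁆ + ⁅L 1, ⁅L 0, x⁆⁆ := h.lie_lie x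
  rw [this]
  module

theorem lie_zero_lie_neg_one (x : g) : ⁅L 0, ⁅L (-1), x⁆⁆ = ⁅L (-1), ⁅L 0, x⁆⁆ + ⁅L (-1), x⁆ := by
  have : ⁅L 0, ⁅L (-1), x⁆⁆ = (1 : 𝕜) • ⁅L (-1), x⁆ + ⁅L (-1), ⁅L 0, x⁆⁆ := h.lie_lie x
  rw [this]
  module

theorem lie_neg_one_lie_one (x : g) :
    ⁅L (-1), ⁅L 1, x⁆⁆ = ⁅L 1, ⁅L (-1), x⁆⁆ - (2 : 𝕜) • ⁅L 0, x⁆ := by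
  have : ⁅L (-1), ⁅L 1, x⁆⁆ = (-2 : 𝕜) • ⁅L 0, x⁆ + ⁅L 1, ⁅L (-1), x⁆⁆ := h.lie_lie x
  rw [this]
  module

theorem lie_one_casimir (x : g) : ⁅L 1, casimir 𝕜 L x⁆ = casimir 𝕜 L ⁅L 1, x⁆ := by
  simp only [casimir_apply, h.lie_zero_lie_one, h.lie_neg_one_lie_one, lie_sub, lie_smul]
  module

theorem lie_neg_one_casimir (x : g) : ⁅L (-1), casimir 𝕜 L x⁆ = casimir 𝕜 L ⁅L (-1), x⁆ := by
  simp only [casimir_apply, h.lie_zero_lie_neg_one, h.lie_neg_one_lie_one, lie_sub, lie_add]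
  module

theorem casimir_reflected : casimir 𝕜 (reflected L) = casimir 𝕜 L := by
  ext x
  simp only [casimir_apply, reflected, neg_lie, lie_neg, neg_neg, neg_zero,
    h.lie_neg_one_lie_one]
  module

variable {K : g} (hK : ⁅L 0, K⁆ = 0)
include hK

theorem lie_zero_ladder (k : ℕ) : ⁅L 0, ladder L K k⁆ = (-k : 𝕜) • ladder L K k := by
  induction k with
  | zero => simpa [ladder] using hK
  | succ k ih =>
    rw [ladder, h.lie_zero_lie_one, ih, lie_smul]
    push_cast
    module

theorem lie_neg_one_ladder_succ (k : ℕ) :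
    ⁅L (-1), ladder L K (k + 1)⁆ =
      casimir 𝕜 L (ladder L K k) + (k * (k + 1) : 𝕜) • ladder L K k := by
  simp only [ladder, h.lie_neg_one_lie_one, casimir_apply, h.lie_zero_ladder hK, lie_smul]
  module

end Sl2

end IsWittOn

/-! ### The adjoint module generated by the central element -/

variable (𝕜) in
/-- `L` satisfies both halves of the Witt relations, and the element `K` measuring the failure of
the relation between `L₂` and `L₋₂` commutes with these two elements. -/
structure IsGluedWitt (L : ℤ → g) (K : g) : Prop where
  upper : IsWittOn 𝕜 (Set.Ici (-1)) L
  lower : IsWittOn 𝕜 (Set.Iic 1) L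
  lie_two_neg_two : ⁅L 2, L (-2)⁆ = (4 : 𝕜) • L 0 + (1 / 2 : 𝕜) • K
  lie_two_center : ⁅L 2, K⁆ = 0
  lie_neg_two_center : ⁅L (-2), K⁆ = 0

namespace IsGluedWitt

variable {K : g} (h : IsGluedWitt 𝕜 L K)
include h

local notation "Ω" => casimir 𝕜 L
local notation "X" => ladder L K

theorem sl2 : IsWittOn 𝕜 (Set.Icc (-1) 1) L :=
  h.upper.mono Set.Icc_subset_Ici_self

theorem reflect : IsGluedWitt 𝕜 (reflected L) (-K) where
  upper := by simpa using h.lower.reflect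
  lower := by simpa using h.upper.reflect
  lie_two_neg_two := by
    simp only [reflected, neg_lie, lie_neg, neg_neg, neg_zero, ← lie_skew (L (-2)) (L 2),
      h.lie_two_neg_two]
    module
  lie_two_center := by simp [reflected, h.lie_neg_two_center]
  lie_neg_two_center := by simp [reflected, h.lie_two_center]

theorem lie_neg_one (j : ℤ) : ⁅L (-1), L j⁆ = ((-1 - j : ℤ) : 𝕜) • L (-1 + j) := by
  obtain hj | hj := le_total j 1
  · exact h.lower _ _ (by simp) hj
  · exact h.upper _ _ (by simp) (by simp; lia)

theorem lie_neg_two_lie_one (x : g) :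
    ⁅L (-2), ⁅L 1, x⁆⁆ = (-3 : 𝕜) • ⁅L (-1), x⁆ + ⁅L 1, ⁅L (-2), x⁆⁆ :=
  h.lower.lie_lie x

theorem lie_two_lie_neg_one (x : g) :
    ⁅L 2, ⁅L (-1), x⁆⁆ = (3 : 𝕜) • ⁅L 1, x⁆ + ⁅L (-1), ⁅L 2, x⁆⁆ :=
  h.upper.lie_lie x

theorem lie_neg_two_ladder_one : ⁅L (-2), X 1⁆ = (-3 : 𝕜) • ⁅L (-1), K⁆ := by
  simp [ladder, h.lie_neg_two_lie_one, h.lie_neg_two_center]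

theorem lie_three_center : ⁅L 3, K⁆ = ⁅L 2, X 1⁆ := by
  have hL : ⁅L 2, ⁅L 1, K⁆⁆ = (1 : 𝕜) • ⁅L 3, K⁆ + ⁅L 1, ⁅L 2, K⁆⁆ := h.upper.lie_lie K
  simpa [ladder, h.lie_two_center] using hL.symm

variable [CharZero 𝕜]

theorem lie_zero_center : ⁅L 0, K⁆ = 0 := by
  have h2 : ⁅L 0, L 2⁆ = (-2 : 𝕜) • L 2 := h.upper.lie_eq
  have hm2 : ⁅L 0, L (-2)⁆ = (2 : 𝕜) • L (-2) := h.lower.lie_eq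
  have hL := leibniz_lie (L 0) (L 2) (L (-2))
  simp only [h.lie_two_neg_two, h2, hm2, lie_add, lie_smul, smul_lie, lie_self] at hL
  linear_combination (norm := module) (2 : 𝕜) • hL

theorem lie_one_lie_neg_one_center : ⁅L 1, ⁅L (-1), K⁆⁆ = Ω K := by
  simp [casimir_apply, h.lie_zero_center]

theorem lie_neg_one_ladder_succ (k : ℕ) :
    ⁅L (-1), X (k + 1)⁆ = Ω (X k) + (k * (k + 1) : 𝕜) • X k :=
  h.sl2.lie_neg_one_ladder_succ h.lie_zero_center k

theorem lie_neg_one_ladder_one : ⁅L (-1), X 1⁆ = Ω K := by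
  simpa [ladder] using h.lie_neg_one_ladder_succ 0

theorem lie_neg_two_ladder_add_two (k : ℕ) :
    ⁅L (-2), X (k + 2)⁆ =
      (-3 * (k + 2) : 𝕜) • Ω (X k) - (k * (k + 1) * (k + 2) : 𝕜) • X k := by
  induction k with
  | zero =>
    change ⁅L (-2), ⁅L 1, X 1⁆⁆ = _
    rw [h.lie_neg_two_lie_one, h.lie_neg_two_ladder_one, h.lie_neg_one_ladder_succ,
      lie_smul, h.lie_one_lie_neg_one_center]
    simp only [ladder, Nat.cast_zero]
    module
  | succ k ih =>
    rw [ladder, h.lie_neg_two_lie_one, ih, h.lie_neg_one_ladder_succ, lie_sub, lie_smul, lie_smul,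
      h.sl2.lie_one_casimir]
    simp only [ladder]
    push_cast
    module

theorem lie_add_two_neg_two (n : ℕ) :
    ⁅L (n + 2), L (-2)⁆ = (n + 4 : 𝕜) • L n + ((-1) ^ n / (2 * n.factorial) : 𝕜) • X n := by
  induction n with
  | zero => simpa [ladder] using h.lie_two_neg_two
  | succ n ih =>
    have h1 : ⁅L 1, L (n + 2)⁆ = (-(n + 1) : 𝕜) • L (↑(n + 1) + 2) :=
      h.upper.lie_eq (by simp) (by simp; lia) (by push_cast; ring) (by push_cast; ring)
    have h2 : ⁅L 1, L n⁆ = (1 - n : 𝕜) • L (n + 1 : ℕ) :=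
      h.upper.lie_eq (by simp) (by simp) (by push_cast; ring) (by push_cast; ring)
    have h3 : ⁅L (n + 2), L (-1)⁆ = (n + 3 : 𝕜) • L (n + 1 : ℕ) :=
      h.upper.lie_eq (by simp; lia) (by simp) (by push_cast; ring) (by push_cast; ring)
    have h4 : ⁅L 1, L (-2)⁆ = (3 : 𝕜) • L (-1) := h.lower.lie_eq
    have hL := leibniz_lie (L 1) (L (n + 2)) (L (-2))
    rw [ih, h1, h4, lie_smul, h3, lie_add, lie_smul, lie_smul, h2, smul_lie] at hL
    have hn : (n + 1 : 𝕜) ≠ 0 := by exact_mod_cast n.succ_ne_zero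
    have hc : (n + 1 : 𝕜) * ((-1) ^ (n + 1) / (2 * (n + 1).factorial)) =
        -((-1) ^ n / (2 * n.factorial)) := by
      rw [Nat.factorial_succ]
      push_cast
      field_simp
      ring
    apply smul_right_injective g hn
    simp only [ladder]
    push_cast at hL hc ⊢
    linear_combination (norm := module) hL - hc • ⁅L 1, X n⁆

theorem lie_three_neg_two : ⁅L 3, L (-2)⁆ = (5 : 𝕜) • L 1 - (1 / 2 : 𝕜) • X 1 := by
  have := h.lie_add_two_neg_two 1
  norm_num at this
  linear_combination (norm := module) this

theorem lie_two_ladder_one : ⁅L 2, X 1⁆ = (-1 / 12 : 𝕜) • X 3 := by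
  have h23 : ⁅L 2, L 3⁆ = (-1 : 𝕜) • L 5 := h.upper.lie_eq
  have h21 : ⁅L 2, L 1⁆ = (1 : 𝕜) • L 3 := h.upper.lie_eq
  have h30 : ⁅L 3, L 0⁆ = (3 : 𝕜) • L 3 := h.upper.lie_eq
  have h5 := h.lie_add_two_neg_two 3
  norm_num [Nat.factorial] at h5
  have hL := leibniz_lie (L 2) (L 3) (L (-2))
  simp only [h.lie_three_neg_two, h23, h.lie_two_neg_two, h5, h30, h21, h.lie_three_center,
    lie_add, lie_sub, lie_smul, smul_lie] at hL
  linear_combination (norm := module) -hL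

theorem lie_two_ladder_three : ⁅L 2, X 3⁆ = (-1 / 10 : 𝕜) • X 5 := by
  have h23 : ⁅L 2, L 3⁆ = (-1 : 𝕜) • L 5 := h.upper.lie_eq
  have h25 : ⁅L 2, L 5⁆ = (-3 : 𝕜) • L 7 := h.upper.lie_eq
  have h50 : ⁅L 5, L 0⁆ = (5 : 𝕜) • L 5 := h.upper.lie_eq
  have h5 := h.lie_add_two_neg_two 3
  have h7 := h.lie_add_two_neg_two 5
  norm_num [Nat.factorial] at h5 h7
  have hK := leibniz_lie (L 2) (L 3) K
  simp only [h.lie_three_center, h.lie_two_ladder_one, h23, h.lie_two_center, lie_smul, smul_lie,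
    lie_zero] at hK
  have hL := leibniz_lie (L 2) (L 5) (L (-2))
  simp only [h5, h25, h.lie_two_neg_two, h7, h50, h23, lie_add, lie_neg,
    lie_smul, smul_lie] at hL
  linear_combination (norm := module) (-8 : 𝕜) • hL - (4 : 𝕜) • hK

theorem lie_ladder_one_center : ⁅X 1, K⁆ = (11 : 𝕜) • X 1 + (3 / 2 : 𝕜) • Ω (X 1) := by
  have hL := leibniz_lie (L 3) (L (-2)) K
  simp only [h.lie_neg_two_center, h.lie_three_center, h.lie_two_ladder_one, h.lie_three_neg_two,
    h.lie_neg_two_ladder_add_two 1, sub_lie, lie_smul, smul_lie, lie_zero] at hL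
  simp only [ladder] at hL ⊢
  linear_combination (norm := module) (2 : 𝕜) • hL

theorem lie_lie_neg_one_center :
    ⁅⁅L (-1), K⁆, K⁆ = (-11 : 𝕜) • ⁅L (-1), K⁆ - (3 / 2 : 𝕜) • Ω ⁅L (-1), K⁆ := by
  have hL := h.reflect.lie_ladder_one_center
  simp only [ladder, h.sl2.casimir_reflected, reflected, neg_lie, lie_neg, neg_neg] at hL
  linear_combination (norm := module) -hL

theorem lie_neg_two_casimir_ladder_one :
    ⁅L (-2), Ω (X 1)⁆ = (44 : 𝕜) • ⁅L (-1), K⁆ + (3 : 𝕜) • Ω ⁅L (-1), K⁆ := by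
  have hL := leibniz_lie (L (-2)) (X 1) K
  simp only [h.lie_ladder_one_center, h.lie_neg_two_ladder_one, h.lie_neg_two_center,
    h.lie_lie_neg_one_center, lie_add, lie_smul, smul_lie, lie_zero] at hL
  linear_combination (norm := module) (2 / 3 : 𝕜) • hL

theorem lie_two_casimir_lie_neg_one :
    ⁅L 2, Ω ⁅L (-1), K⁆⁆ = (-44 : 𝕜) • X 1 - (3 : 𝕜) • Ω (X 1) := by
  have hL := h.reflect.lie_neg_two_casimir_ladder_one
  simp only [ladder, h.sl2.casimir_reflected, reflected, neg_lie, lie_neg, neg_neg] at hL ⊢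
  linear_combination (norm := module) -hL

theorem lie_two_casimir_center :
    ⁅L 2, Ω K⁆ = (5 / 2 : 𝕜) • X 2 - (1 / 12 : 𝕜) • Ω (X 2) := by
  have h3 := h.lie_neg_one_ladder_succ 2
  have hL := h.lie_two_lie_neg_one (X 1)
  simp only [h.lie_neg_one_ladder_one, h.lie_two_ladder_one, h3, lie_one_ladder, lie_smul] at hL
  linear_combination (norm := module) hL

theorem casimir_casimir_ladder_one :
    Ω (Ω (X 1)) = (588 : 𝕜) • X 1 + (100 : 𝕜) • Ω (X 1) := by
  have h2 := h.lie_neg_one_ladder_succ 1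
  have hL := h.lie_two_lie_neg_one (Ω K)
  simp only [h.sl2.lie_one_casimir, h.sl2.lie_neg_one_casimir, h.lie_two_casimir_lie_neg_one,
    h.lie_two_casimir_center, h2, lie_sub, lie_smul, map_add, map_smul] at hL
  simp only [ladder] at hL ⊢
  linear_combination (norm := module) (12 : 𝕜) • hL

theorem lie_casimir_center_add :
    ⁅Ω K, K⁆ + ⁅X 1, ⁅L (-1), K⁆⁆ = (11 : 𝕜) • Ω K + (3 / 2 : 𝕜) • Ω (Ω K) := by
  have hL := leibniz_lie (L (-1)) (X 1) K
  simp only [h.lie_ladder_one_center, h.lie_neg_one_ladder_one, h.sl2.lie_neg_one_casimir,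
    lie_add, lie_smul] at hL
  exact hL.symm

theorem lie_casimir_center_sub :
    ⁅Ω K, K⁆ - ⁅X 1, ⁅L (-1), K⁆⁆ = (-11 : 𝕜) • Ω K - (3 / 2 : 𝕜) • Ω (Ω K) := by
  have hL := leibniz_lie (L 1) ⁅L (-1), K⁆ K
  simp only [h.lie_lie_neg_one_center, h.lie_one_lie_neg_one_center, h.sl2.lie_one_casimir,
    lie_sub, lie_smul, ← lie_skew (X 1)] at hL ⊢
  simp only [ladder] at hL ⊢
  linear_combination (norm := module) -hL

theorem lie_casimir_center : ⁅Ω K, K⁆ = 0 := by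
  linear_combination (norm := module)
    (1 / 2 : 𝕜) • h.lie_casimir_center_add + (1 / 2 : 𝕜) • h.lie_casimir_center_sub

theorem lie_ladder_one_lie_neg_one :
    ⁅X 1, ⁅L (-1), K⁆⁆ = (11 : 𝕜) • Ω K + (3 / 2 : 𝕜) • Ω (Ω K) := by
  linear_combination (norm := module)
    (1 / 2 : 𝕜) • h.lie_casimir_center_add - (1 / 2 : 𝕜) • h.lie_casimir_center_sub

theorem lie_ladder_two_center : ⁅X 2, K⁆ = (11 : 𝕜) • X 2 + (3 / 2 : 𝕜) • Ω (X 2) := by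
  have hL := leibniz_lie (L 1) (X 1) K
  simp only [h.lie_ladder_one_center, h.sl2.lie_one_casimir, lie_one_ladder,
    lie_add, lie_smul] at hL
  simp only [ladder, lie_self] at hL ⊢
  linear_combination (norm := module) -hL

theorem lie_ladder_three_center : ⁅X 3, K⁆ = -X 3 + (3 / 2 : 𝕜) • Ω (X 3) := by
  have h0 := h.sl2.lie_zero_ladder h.lie_zero_center 3
  have h3 := h.lie_neg_two_ladder_add_two 1
  have h5 := h.lie_neg_two_ladder_add_two 3
  have hK := leibniz_lie (L 2) (X 1) K
  simp only [h.lie_ladder_one_center, h.lie_two_ladder_one, h.lie_two_center, lie_add, lie_smul,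
    smul_lie, lie_zero] at hK
  have hL := leibniz_lie (L 2) (L (-2)) (X 3)
  simp only [h.lie_two_neg_two, h.lie_two_ladder_three, h.lie_two_ladder_one, h0, h3, h5,
    ← lie_skew K, add_lie, lie_sub, lie_smul, smul_lie] at hL
  linear_combination (norm := module) hL + (6 : 𝕜) • hK

theorem lie_ladder_one_ladder_two : ⁅X 1, X 2⁆ = (-12 : 𝕜) • X 3 := by
  have hL := leibniz_lie (L 1) (X 2) K
  simp only [h.lie_ladder_two_center, h.sl2.lie_one_casimir, lie_one_ladder,
    h.lie_ladder_three_center, lie_add, lie_smul] at hL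
  simp only [← lie_skew (X 1) (X 2)]
  simp only [ladder] at hL ⊢
  linear_combination (norm := module) hL

theorem lie_ladder_one_casimir_center :
    ⁅X 1, Ω K⁆ = (286 : 𝕜) • X 1 + (125 / 3 : 𝕜) • Ω (X 1) := by
  have h2 := h.lie_neg_two_ladder_add_two 0
  have h3 := h.lie_neg_two_ladder_add_two 1
  have hL := leibniz_lie (L 1) (X 1) ⁅L (-1), K⁆
  simp only [h.lie_ladder_one_lie_neg_one, h.lie_one_lie_neg_one_center, h.sl2.lie_one_casimir,
    lie_one_ladder, lie_add, lie_smul] at hL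
  have hS := leibniz_lie (L (-2)) (X 1) (X 2)
  simp only [h.lie_ladder_one_ladder_two, h.lie_neg_two_ladder_one, h2, h3, lie_sub,
    ← lie_skew _ (X 2), lie_smul] at hS
  have hΩ := h.casimir_casimir_ladder_one
  simp only [ladder] at hL hS hΩ ⊢
  linear_combination (norm := module) (1 / 9 : 𝕜) • hS - (1 / 3 : 𝕜) • hL + (1 / 2 : 𝕜) • hΩ

theorem lie_casimir_ladder_one_center : ⁅Ω (X 1), K⁆ = ⁅X 1, Ω K⁆ := by
  have hL := leibniz_lie (L 1) (Ω K) K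
  simp only [h.lie_casimir_center, h.sl2.lie_one_casimir, ← lie_skew _ ⁅L 1, K⁆, lie_zero] at hL
  simp only [ladder] at hL ⊢
  linear_combination (norm := module) -hL

theorem lie_ladder_two_casimir_center_add :
    ⁅X 2, Ω K⁆ + ⁅X 1, Ω (X 1)⁆ = (286 : 𝕜) • X 2 + (125 / 3 : 𝕜) • Ω (X 2) := by
  have hL := leibniz_lie (L 1) (X 1) (Ω K)
  simp only [h.lie_ladder_one_casimir_center, h.sl2.lie_one_casimir, lie_one_ladder,
    lie_add, lie_smul] at hL
  simp only [ladder] at hL ⊢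
  exact hL.symm

theorem lie_ladder_one_casimir_ladder_one :
    ⁅X 1, Ω (X 1)⁆ = (44 : 𝕜) • X 2 + (10 / 3 : 𝕜) • Ω (X 2) := by
  have hT := leibniz_lie (L 2) (Ω K) K
  simp only [h.lie_casimir_center, h.lie_two_casimir_center, h.lie_two_center,
    h.lie_ladder_two_center, sub_lie, smul_lie, lie_zero] at hT
  have hL := leibniz_lie (L 1) (Ω (X 1)) K
  simp only [h.lie_casimir_ladder_one_center, h.lie_ladder_one_casimir_center,
    h.sl2.lie_one_casimir, lie_one_ladder, ← lie_skew _ ⁅L 1, K⁆, lie_add, lie_smul] at hL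
  simp only [ladder] at hT hL ⊢
  linear_combination (norm := module) hL + (12 : 𝕜) • hT

theorem lie_ladder_one_casimir_ladder_one' :
    ⁅X 1, Ω (X 1)⁆ = (107 : 𝕜) • X 2 + (89 / 6 : 𝕜) • Ω (X 2) := by
  have h2 := h.lie_neg_one_ladder_succ 1
  have h3 := h.lie_neg_one_ladder_succ 2
  have hL := leibniz_lie (L (-1)) (X 1) (X 2)
  simp only [h.lie_ladder_one_ladder_two, h.lie_neg_one_ladder_one, h2, h3, ← lie_skew _ (X 2),
    lie_add, lie_smul, lie_self] at hL
  have hC := h.lie_ladder_two_casimir_center_add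
  linear_combination (norm := module) (1 / 2 : 𝕜) • hC - (1 / 2 : 𝕜) • hL

theorem casimir_ladder_two : Ω (X 2) = (-126 / 23 : 𝕜) • X 2 := by
  linear_combination (norm := module) (2 / 23 : 𝕜) • h.lie_ladder_one_casimir_ladder_one -
    (2 / 23 : 𝕜) • h.lie_ladder_one_casimir_ladder_one'

theorem lie_neg_two_casimir_ladder_two : ⁅L (-2), Ω (X 2)⁆ = (44 : 𝕜) • Ω K := by
  have h1 := h.lie_neg_two_lie_one (Ω (X 1))
  simp only [h.lie_neg_two_casimir_ladder_one, h.sl2.lie_one_casimir, h.sl2.lie_neg_one_casimir,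
    h.lie_neg_one_ladder_one, h.lie_one_lie_neg_one_center, lie_one_ladder, lie_add, lie_smul] at h1
  linear_combination (norm := module) h1

theorem casimir_center : Ω K = 0 := by
  have h2 := h.lie_neg_two_ladder_add_two 0
  have hL := congrArg (⁅L (-2), ·⁆) h.casimir_ladder_two
  simp only [h.lie_neg_two_casimir_ladder_two, h2, lie_smul] at hL
  linear_combination (norm := (simp only [ladder]; module)) (23 / 256 : 𝕜) • hL

theorem lie_one_center : ⁅L 1, K⁆ = 0 := by
  have h1 : Ω (X 1) = 0 := by
    simp only [ladder, ← h.sl2.lie_one_casimir, h.casimir_center, lie_zero]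
  have h2 := h.casimir_casimir_ladder_one
  rw [h1, map_zero, smul_zero, add_zero, eq_comm] at h2
  exact (smul_eq_zero.1 h2).resolve_left (by norm_num)

theorem lie_neg_one_center : ⁅L (-1), K⁆ = 0 := by
  simpa [reflected] using h.reflect.lie_one_center

/-! ### The Virasoro relations -/

theorem lie_center_of_nonneg {i : ℤ} (hi : 0 ≤ i) : ⁅L i, K⁆ = 0 := by
  obtain rfl | rfl | hi : i = 0 ∨ i = 1 ∨ 2 ≤ i := by lia
  · exact h.lie_zero_center
  · exact h.lie_one_center
  induction i, hi using Int.leInduction with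
  | base => exact h.lie_two_center
  | succ i hi ih =>
    have h1 : ⁅L 1, L i⁆ = ((1 - i : ℤ) : 𝕜) • L (i + 1) :=
      h.upper.lie_eq (by simp) (by simp; lia) (add_comm _ _) rfl
    have hL := leibniz_lie (L 1) (L i) K
    rw [ih (by lia), h.lie_one_center, h1, lie_zero, lie_zero, add_zero, smul_lie, eq_comm] at hL
    exact (smul_eq_zero.1 hL).resolve_left (by norm_cast; lia)

theorem lie_center (i : ℤ) : ⁅L i, K⁆ = 0 := by
  obtain hi | hi := le_total 0 i
  · exact h.lie_center_of_nonneg hi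
  · simpa [reflected] using h.reflect.lie_center_of_nonneg (neg_nonneg.2 hi)

theorem ladder_succ (k : ℕ) : X (k + 1) = 0 := by
  induction k with
  | zero => exact h.lie_one_center
  | succ k ih => rw [ladder, ih, lie_zero]

theorem lie_neg_two {i : ℤ} (hi : -1 ≤ i) :
    ⁅L i, L (-2)⁆ = virasoroBracket 𝕜 L K i (-2) := by
  obtain hi' | rfl | hi' : i ≤ 1 ∨ i = 2 ∨ 3 ≤ i := by lia
  · rw [virasoroBracket_of_add_ne_zero _ _ _ (by lia), h.lower _ _ hi' (by simp)]
  · rw [h.lie_two_neg_two, virasoroBracket]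
    norm_num
  · obtain ⟨n, rfl⟩ : ∃ n : ℕ, i = (n + 1 : ℕ) + 2 := ⟨(i - 3).toNat, by lia⟩
    rw [virasoroBracket_of_add_ne_zero _ _ _ (by lia), h.lie_add_two_neg_two, h.ladder_succ,
      smul_zero, add_zero, add_neg_cancel_right]
    congr 1
    push_cast
    ring

/-- The Jacobi identity for `Lᵢ, L₋₁, Lⱼ` with the brackets prescribed by the Virasoro relations. -/
theorem smul_virasoroBracket_neg_one_add (i j : ℤ) :
    ((-1 - j : ℤ) : 𝕜) • virasoroBracket 𝕜 L K i (-1 + j) =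
      ((i + 1 : ℤ) : 𝕜) • virasoroBracket 𝕜 L K (i - 1) j +
        ⁅L (-1), virasoroBracket 𝕜 L K i j⁆ := by
  have e1 : i - 1 + j = -1 + (i + j) := by ring
  have e2 : i + (-1 + j) = -1 + (i + j) := by ring
  have hK : ∀ p : Prop, ∀ [Decidable p] (c : 𝕜), ⁅L (-1), if p then c • K else 0⁆ = 0 := by
    intro p _ c
    split_ifs <;> simp [h.lie_neg_one_center]
  simp only [virasoroBracket, lie_add, hK, lie_smul, h.lie_neg_one, e1, e2]
  split_ifs with hij
  · obtain rfl : j = 1 - i := by lia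
    push_cast
    module
  · push_cast
    module

theorem lie_of_neg_one_le {i : ℤ} (hi : -1 ≤ i) (j : ℤ) :
    ⁅L i, L j⁆ = virasoroBracket 𝕜 L K i j := by
  obtain hj | hj := le_total (-1) j
  · rw [virasoroBracket_of_neg_one_le _ _ _ hi hj, h.upper i j hi hj]
  obtain rfl | hj : j = -1 ∨ j ≤ -2 := by lia
  · rw [virasoroBracket_of_neg_one_le _ _ _ hi le_rfl, h.upper i (-1) hi (by simp)]
  induction j, hj using Int.leInductionDown generalizing i with
  | base => exact h.lie_neg_two hi
  | pred j hj ih =>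
    obtain rfl | hi' := hi.eq_or_lt
    · rw [virasoroBracket_of_add_ne_zero _ _ _ (by lia), h.lie_neg_one]
    have hi1 : ⁅L i, L (-1)⁆ = ((i + 1 : ℤ) : 𝕜) • L (i - 1) :=
      h.upper.lie_eq hi (by simp) rfl (by push_cast; ring)
    have hL := leibniz_lie (L i) (L (-1)) (L j)
    rw [h.lie_neg_one, hi1, ih hi (by lia), smul_lie, lie_smul, ih (by lia) (by lia),
      ← h.smul_virasoroBracket_neg_one_add] at hL
    rw [sub_eq_neg_add]
    exact smul_right_injective g (by norm_cast; lia) hL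

theorem isVirasoro : IsVirasoro 𝕜 L K := by
  refine ⟨fun i ↦ by rw [← lie_skew, h.lie_center, neg_zero], fun i j ↦ ?_⟩
  obtain hi | hi := le_total (-1) i
  · exact h.lie_of_neg_one_le hi j
  obtain hj | hj := le_total (-1) j
  · rw [← lie_skew, h.lie_of_neg_one_le hj, virasoroBracket_swap, neg_neg]
  · rw [virasoroBracket_of_add_ne_zero _ _ _ (by lia), h.lower i j (by simp; lia) (by simp; lia)]

end IsGluedWitt

/-! ### Gluing -/

namespace IsVirasoro

variable {K : g}

theorem eq_center [CharZero 𝕜] (h : IsVirasoro 𝕜 L K) :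
    K = (-8 : 𝕜) • L 0 - (2 : 𝕜) • ⁅L (-2), L 2⁆ := by
  have hL := h.2 (-2) 2
  norm_num [virasoroBracket] at hL
  rw [hL]
  module

end IsVirasoro

variable (𝕜) in
/-- `L` extends the `sl₂`-triple `(E, F, H)`, as `L₋₁ = F`, `L₀ = -H/2` and `L₁ = -E`, to a family
satisfying the Witt relations for indices in `s`. -/
def IsWittExtension (s : Set ℤ) (E F H : g) (L : ℤ → g) : Prop :=
  L (-1) = F ∧ L 0 = (-(1 / 2) : 𝕜) • H ∧ L 1 = -E ∧ IsWittOn 𝕜 s L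

variable (𝕜) in
/-- `L` extends the `sl₂`-triple `(E, F, H)`, as `L₋₁ = F`, `L₀ = -H/2` and `L₁ = -E`, to a family
satisfying the Virasoro relations with central element `K`. -/
def IsVirasoroExtension (E F H : g) (L : ℤ → g) (K : g) : Prop :=
  L (-1) = F ∧ L 0 = (-(1 / 2) : 𝕜) • H ∧ L 1 = -E ∧ IsVirasoro 𝕜 L K

/-- The family which is `Lg` in degrees `≥ -1` and `Ll` in lower degrees. -/
def glue {α : Type*} (Lg Ll : ℤ → α) (i : ℤ) : α := if -1 ≤ i then Lg i else Ll i

theorem glue_of_neg_one_le {α : Type*} (Lg Ll : ℤ → α) {i : ℤ} (hi : -1 ≤ i) :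
    glue Lg Ll i = Lg i :=
  if_pos hi

section Glue

variable {E F H : g} {Lg Ll : ℤ → g} (hg : IsWittExtension 𝕜 (Set.Ici (-1)) E F H Lg)
  (hl : IsWittExtension 𝕜 (Set.Iic 1) E F H Ll)
include hg hl

theorem glue_of_le_one {i : ℤ} (hi : i ≤ 1) : glue Lg Ll i = Ll i := by
  obtain ⟨hgF, hgH, hgE, -⟩ := hg
  obtain ⟨hlF, hlH, hlE, -⟩ := hl
  obtain hi' | rfl | rfl | rfl : i < -1 ∨ i = -1 ∨ i = 0 ∨ i = 1 := by lia
  · exact if_neg (by lia)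
  all_goals simp [glue, *]

theorem isGluedWitt_glue [CharZero 𝕜] {K : g} (hK : K = (4 : 𝕜) • H - (2 : 𝕜) • ⁅Ll (-2), Lg 2⁆)
    (hKl : ⁅K, Ll (-2)⁆ = 0) (hKg : ⁅K, Lg 2⁆ = 0) : IsGluedWitt 𝕜 (glue Lg Ll) K := by
  have h2 : glue Lg Ll 2 = Lg 2 := glue_of_neg_one_le Lg Ll (by norm_num)
  have hm2 : glue Lg Ll (-2) = Ll (-2) := glue_of_le_one hg hl (by norm_num)
  have h0 : glue Lg Ll 0 = (-(1 / 2) : 𝕜) • H :=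
    (glue_of_neg_one_le Lg Ll (by norm_num)).trans hg.2.1
  refine ⟨hg.2.2.2.congr (fun i hi ↦ (glue_of_neg_one_le Lg Ll hi).symm) ?_,
    hl.2.2.2.congr (fun i hi ↦ (glue_of_le_one hg hl hi).symm) ?_, ?_, ?_, ?_⟩
  · simp only [Set.mem_Ici]
    lia
  · simp only [Set.mem_Iic]
    lia
  · rw [h2, hm2, h0, hK, ← lie_skew (Lg 2)]
    module
  · rw [h2, ← lie_skew, hKg, neg_zero]
  · rw [hm2, ← lie_skew, hKl, neg_zero]

end Glue

end VirasoroGluing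

open VirasoroGluing in
theorem virasoro_gluing_iff_general {𝕜 g : Type*} [Field 𝕜] [CharZero 𝕜] [LieRing g]
    [LieAlgebra 𝕜 g] {E F H : g} {Lg Ll : ℤ → g}
    (hg : IsWittExtension 𝕜 (Set.Ici (-1)) E F H Lg)
    (hl : IsWittExtension 𝕜 (Set.Iic 1) E F H Ll) :
    ((∃ (L : ℤ → g) (K : g), IsVirasoroExtension 𝕜 E F H L K ∧
        (∀ i : ℤ, -1 ≤ i → L i = Lg i) ∧ (∀ i : ℤ, i ≤ 1 → L i = Ll i)) ↔
      (⁅(4 : 𝕜) • H - (2 : 𝕜) • ⁅Ll (-2), Lg 2⁆, Ll (-2)⁆ = 0 ∧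
        ⁅(4 : 𝕜) • H - (2 : 𝕜) • ⁅Ll (-2), Lg 2⁆, Lg 2⁆ = 0)) ∧
    (∀ (L : ℤ → g) (K : g), IsVirasoroExtension 𝕜 E F H L K →
        (∀ i : ℤ, -1 ≤ i → L i = Lg i) → (∀ i : ℤ, i ≤ 1 → L i = Ll i) →
          K = (4 : 𝕜) • H - (2 : 𝕜) • ⁅Ll (-2), Lg 2⁆) := by
  have unique (L : ℤ → g) (K : g) (hL : IsVirasoroExtension 𝕜 E F H L K)
      (hLg : ∀ i : ℤ, -1 ≤ i → L i = Lg i) (hLl : ∀ i : ℤ, i ≤ 1 → L i = Ll i) :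
      K = (4 : 𝕜) • H - (2 : 𝕜) • ⁅Ll (-2), Lg 2⁆ := by
    obtain ⟨-, h0, -, hV⟩ := hL
    rw [hV.eq_center, h0, hLg 2 (by norm_num), hLl (-2) (by norm_num)]
    module
  refine ⟨⟨?_, fun ⟨hKl, hKg⟩ ↦ ?_⟩, unique⟩
  · rintro ⟨L, K, hL, hLg, hLl⟩
    rw [← unique L K hL hLg hLl, ← hLg 2 (by norm_num), ← hLl (-2) (by norm_num)]
    exact ⟨hL.2.2.2.1 _, hL.2.2.2.1 _⟩
  · have hglue {i : ℤ} (hi : -1 ≤ i) := glue_of_neg_one_le Lg Ll hi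
    refine ⟨glue Lg Ll, _, ⟨?_, ?_, ?_, (isGluedWitt_glue hg hl rfl hKl hKg).isVirasoro⟩,
      fun _ ↦ hglue, fun _ ↦ glue_of_le_one hg hl⟩
    · exact (hglue (by norm_num)).trans hg.1
    · exact (hglue (by norm_num)).trans hg.2.1
    · exact (hglue (by norm_num)).trans hg.2.2.1

/-- a Witt_>-structure and a Witt_<-structure extending a non trivial
sl(2)-representation glue to a Virasoro-module structure if and only if
`K = 4H − 2[S,T]` commutes with both `S = ρ^<₋₂` and `T = ρ^>₂`; in that case the
central element is necessarily represented by `K`. -/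
theorem virasoro_gluing_iff
    (V : Type*) [AddCommGroup V] [Module ℂ V]
    (E F H : Module.End ℂ V)
    (hEF : ⁅E, F⁆ = H) (hHE : ⁅H, E⁆ = (2 : ℂ) • E) (hHF : ⁅H, F⁆ = (-2 : ℂ) • F)
    (hnt : ¬ (E = 0 ∧ F = 0 ∧ H = 0))
    (ρg ρl : ℤ → Module.End ℂ V)
    (hg : IsWittGtModule E F H ρg) (hl : IsWittLtModule E F H ρl) :
    ((∃ (ρ : ℤ → Module.End ℂ V) (K' : Module.End ℂ V),
        IsVirasoroModule E F H ρ K' ∧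
          (∀ i : ℤ, -1 ≤ i → ρ i = ρg i) ∧ (∀ i : ℤ, i ≤ 1 → ρ i = ρl i)) ↔
      (⁅(4 : ℂ) • H - (2 : ℂ) • ⁅ρl (-2), ρg 2⁆, ρl (-2)⁆ = 0 ∧
        ⁅(4 : ℂ) • H - (2 : ℂ) • ⁅ρl (-2), ρg 2⁆, ρg 2⁆ = 0)) ∧
    (∀ (ρ : ℤ → Module.End ℂ V) (K' : Module.End ℂ V),
      IsVirasoroModule E F H ρ K' →
        (∀ i : ℤ, -1 ≤ i → ρ i = ρg i) → (∀ i : ℤ, i ≤ 1 → ρ i = ρl i) →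
          K' = (4 : ℂ) • H - (2 : ℂ) • ⁅ρl (-2), ρg 2⁆) := by
  let _ : LieRing (Module.End ℂ V) := .ofAssociativeRing
  let _ : LieAlgebra ℂ (Module.End ℂ V) := .ofAssociativeAlgebra
  exact virasoro_gluing_iff_general hg hl
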